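/- arXiv:2110.01138 — 2 statements merged into one kernel-verified Lean document; each statement's English description precedes it below -/
import Mathlib

section
/- Let K be a reflective full subcategory of Top₀ closed under homeomorphisms such that K ⊄ Top₁. If f : X → Y is a continuous map between sober spaces X and Y, and Y₁ ⊆ Y is a subset whose subspace belongs to K, then the subspace f⁻¹(Y₁) of X belongs to K. -/
open TopologicalSpace

/-- The b-topology associated with a topological space `(X, t)`: the topology with base
`{U ∩ cl({x}) : x ∈ U, U open}`. -/
def bTop (X : Type) (t : TopologicalSpace X) : TopologicalSpace X :=
  TopologicalSpace.generateFrom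
    {s | ∃ (U : Set X) (x : X), @IsOpen X t U ∧ x ∈ U ∧ s = U ∩ @closure X t {x}}

/-- The specialization order of `(X, t)`: `x ≤ y` iff `x ∈ cl({y})`. -/
def specLE {X : Type} (t : TopologicalSpace X) (x y : X) : Prop :=
  x ∈ @closure X t {y}

/-- The subspace topology on a subset. -/
def subTop {X : Type} (t : TopologicalSpace X) (A : Set X) : TopologicalSpace A :=
  TopologicalSpace.induced Subtype.val t

/-- A class of topological spaces, viewed as the object class of a full subcategory of Top. -/
abbrev SpaceClass : Type 1 := (X : Type) → TopologicalSpace X → Prop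

/-- All members of `K` are T₀ (i.e. `K` is a subcategory of `Top₀`). -/
def AllT0 (K : SpaceClass) : Prop := ∀ X t, K X t → @T0Space X t

/-- `K` is closed under homeomorphisms. -/
def ClosedUnderHomeo (K : SpaceClass) : Prop :=
  ∀ (X Y : Type) (tX : TopologicalSpace X) (tY : TopologicalSpace Y),
    K X tX → Nonempty (@Homeomorph X Y tX tY) → K Y tY

/-- `K ⊄ Top₁`: `K` contains a space that is not T₁. -/
def NotSubT1 (K : SpaceClass) : Prop := ∃ X t, K X t ∧ ¬ @T1Space X t

/-- `μ : X → Xk` is a K-reflection for `X`: `Xk ∈ K`, `μ` is continuous and every continuous map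
from `X` to a member of `K` factors uniquely (continuously) through `μ`. -/
def IsReflection (K : SpaceClass) {X Xk : Type} (tX : TopologicalSpace X)
    (tk : TopologicalSpace Xk) (μ : X → Xk) : Prop :=
  K Xk tk ∧ @Continuous X Xk tX tk μ ∧
    ∀ (Z : Type) (tZ : TopologicalSpace Z), K Z tZ →
      ∀ f : X → Z, @Continuous X Z tX tZ f →
        ∃! g : Xk → Z, @Continuous Xk Z tk tZ g ∧ g ∘ μ = f

/-- `K` is reflective in `Top₀`: every T₀ space admits a K-reflection. -/
def IsReflective (K : SpaceClass) : Prop :=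
  ∀ (X : Type) (tX : TopologicalSpace X), @T0Space X tX →
    ∃ (Xk : Type) (tk : TopologicalSpace Xk) (μ : X → Xk), IsReflection K tX tk μ

/-- `K` is b-closed-hereditary. -/
def BClosedHereditary (K : SpaceClass) : Prop :=
  ∀ (X : Type) (tX : TopologicalSpace X) (A : Set X),
    K X tX → @IsClosed X (bTop X tX) A → K A (subTop tX A)

/-- `K` is productive. -/
def Productive (K : SpaceClass) : Prop :=
  ∀ (I : Type) (X : I → Type) (t : ∀ i, TopologicalSpace (X i)),
    (∀ i, K (X i) (t i)) → K (∀ i, X i) (@Pi.topologicalSpace I X t)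

/-- `K` has equalizers. -/
def HasEqualizers (K : SpaceClass) : Prop :=
  ∀ (X Y : Type) (tX : TopologicalSpace X) (tY : TopologicalSpace Y),
    K X tX → K Y tY → ∀ f g : X → Y, @Continuous X Y tX tY f → @Continuous X Y tX tY g →
      K {x | f x = g x} (subTop tX {x | f x = g x})

/-- `(X, t)` is sober: T₀ and every irreducible closed set is the closure of a point. -/
def Sober (X : Type) (t : TopologicalSpace X) : Prop := @T0Space X t ∧ @QuasiSober X t

theorem aux_retract {K : SpaceClass} (hHomeo : ClosedUnderHomeo K) {X Xk : Type}
    [tX : TopologicalSpace X] [tk : TopologicalSpace Xk] {μ : X → Xk}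
    (h : IsReflection K tX tk μ) (r : Xk → X) (hr : Continuous r) (hrm : ∀ x, r (μ x) = x) :
    K X tX := by
  obtain ⟨hK, hμ, hu⟩ := h
  have h2 : μ ∘ r = id := by
    refine (hu Xk tk hK μ hμ).unique ⟨hμ.comp hr, ?_⟩ ⟨continuous_id, rfl⟩
    funext x
    simp [hrm]
  exact hHomeo Xk X tk tX hK ⟨@Homeomorph.mk Xk X tk tX
    ⟨r, μ, fun z => congrFun h2 z, hrm⟩ hr hμ⟩

theorem aux_sierpinski {K : SpaceClass} (hT0 : AllT0 K) (hHomeo : ClosedUnderHomeo K)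
    (hRefl : IsReflective K) (hNotT1 : NotSubT1 K) : K Prop sierpinskiSpace := by
  obtain ⟨Z, tZ, hZ, hn⟩ := hNotT1
  have : T0Space Z := hT0 Z tZ hZ
  have hxy : ∃ x y : Z, y ⤳ x ∧ y ≠ x := by
    by_contra hc
    push Not at hc
    exact hn (t1Space_iff_specializes_imp_eq.2 fun {a b} hab => hc b a hab)
  obtain ⟨x, y, hs, hne⟩ := hxy
  obtain ⟨U, hU, hyU, hxU⟩ : ∃ U : Set Z, IsOpen U ∧ y ∈ U ∧ x ∉ U := by
    by_contra hc
    push Not at hc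
    exact hne (hs.antisymm (specializes_iff_forall_open.2 hc)).eq
  obtain ⟨Sk, tk, μ, hμ⟩ := hRefl Prop sierpinskiSpace inferInstance
  classical
  have hfc : Continuous (fun p : Prop => if p then y else x) := by
    refine continuous_def.2 fun V hV => ?_
    by_cases hx : x ∈ V
    · have hy : y ∈ V := specializes_iff_forall_open.1 hs V hV hx
      convert isOpen_univ
      ext p
      by_cases hp : p <;> simp [hp, hx, hy]
    · by_cases hy : y ∈ V
      · convert isOpen_singleton_true
        ext p
        by_cases hp : p <;> simp [hp, hx, hy]
      · convert isOpen_empty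
        ext p
        by_cases hp : p <;> simp [hp, hx, hy]
  obtain ⟨g, ⟨hg, hgm⟩, -⟩ := hμ.2.2 Z tZ hZ _ hfc
  refine aux_retract hHomeo hμ (fun w => g w ∈ U) (continuous_Prop.2 (hU.preimage hg)) ?_
  intro p
  have := congrFun hgm p
  simp only [Function.comp] at this
  rw [this]
  by_cases hp : p <;> simp [hp, hyU, hxU]

theorem aux_sober {K : SpaceClass} (hHomeo : ClosedUnderHomeo K)
    (hRefl : IsReflective K) (hS : K Prop sierpinskiSpace) (X : Type) [tX : TopologicalSpace X]
    [T0Space X] [QuasiSober X] : K X tX := by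
  obtain ⟨Xk, tk, μ, hμ⟩ := hRefl X tX inferInstance
  have hc := hμ.2.1
  have hinj : ∀ V W : Set Xk, IsOpen V → IsOpen W → μ ⁻¹' V = μ ⁻¹' W → V = W := by
    intro V W hV hW h
    have := (hμ.2.2 Prop _ hS (fun x => μ x ∈ V) (continuous_Prop.2 (hV.preimage hc))).unique
      (y₁ := fun z => z ∈ V) (y₂ := fun z => z ∈ W)
      ⟨continuous_Prop.2 hV, rfl⟩ ⟨continuous_Prop.2 hW, ?_⟩
    · exact this
    · exact h.symm
  have hsurj : ∀ U : Set X, IsOpen U → ∃ V : Set Xk, IsOpen V ∧ μ ⁻¹' V = U := by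
    intro U hU
    obtain ⟨g, ⟨hg, hgm⟩, -⟩ := hμ.2.2 Prop _ hS (fun x => x ∈ U) (continuous_Prop.2 hU)
    exact ⟨{z | g z}, continuous_Prop.1 hg, hgm⟩
  have key : ∀ (z : Xk) (V : Set Xk), IsOpen V →
      ((μ ⁻¹' (closure {z}) ∩ μ ⁻¹' V).Nonempty ↔ z ∈ V) := by
    intro z V hV
    constructor
    · rintro ⟨x, hx, hxV⟩
      exact (specializes_iff_mem_closure.2 hx).mem_open hV hxV
    · intro hz
      by_contra hne
      rw [Set.not_nonempty_iff_eq_empty] at hne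
      have hW : IsOpen (closure {z} : Set Xk)ᶜ := isClosed_closure.isOpen_compl
      have := hinj (V ∪ (closure {z})ᶜ) _ (hV.union hW) hW (by
        ext x
        have : x ∉ μ ⁻¹' (closure {z}) ∩ μ ⁻¹' V := by simp [hne]
        simp only [Set.mem_inter_iff, Set.mem_preimage] at this
        simp only [Set.mem_preimage, Set.mem_union, Set.mem_compl_iff]
        tauto)
      have hz2 : z ∈ (closure {z} : Set Xk)ᶜ := this ▸ Or.inl hz
      exact hz2 (subset_closure rfl)
  have hirr : ∀ z : Xk, IsIrreducible (μ ⁻¹' (closure {z})) := by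
    intro z
    refine ⟨?_, ?_⟩
    · have := (key z Set.univ isOpen_univ).2 trivial
      exact this.mono Set.inter_subset_left
    · intro U U' hU hU' h h'
      obtain ⟨V, hV, rfl⟩ := hsurj U hU
      obtain ⟨V', hV', rfl⟩ := hsurj U' hU'
      rw [key z V hV] at h
      rw [key z V' hV'] at h'
      exact (key z (V ∩ V') (hV.inter hV')).2 ⟨h, h'⟩
  choose r hr using fun z => QuasiSober.sober (hirr z) (isClosed_closure.preimage hc)
  have hrV : ∀ z (V : Set Xk), IsOpen V → (r z ∈ μ ⁻¹' V ↔ z ∈ V) := by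
    intro z V hV
    rw [← key z V hV]
    exact (hr z).mem_open_set_iff (hV.preimage hc)
  refine aux_retract hHomeo hμ r ?_ ?_
  · refine continuous_def.2 fun U hU => ?_
    obtain ⟨V, hV, rfl⟩ := hsurj U hU
    convert hV
    ext z
    exact hrV z V hV
  · intro x
    refine (inseparable_iff_forall_isOpen.2 fun U hU => ?_).eq
    obtain ⟨V, hV, rfl⟩ := hsurj U hU
    exact hrV (μ x) V hV

/-- let `K` be a reflective full subcategory of Top₀ closed under homeomorphisms
containing a non-T₁ space. If `f : X → Y` is continuous, `X`, `Y` sober, and the subspace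
`Y₁ ⊆ Y` belongs to `K`, then the subspace `f⁻¹(Y₁)` belongs to `K`. -/
theorem statement14 (K : SpaceClass) (hT0 : AllT0 K) (hHomeo : ClosedUnderHomeo K)
    (hRefl : IsReflective K) (hNotT1 : NotSubT1 K)
    (X Y : Type) (tX : TopologicalSpace X) (tY : TopologicalSpace Y)
    (hX : Sober X tX) (hY : Sober Y tY)
    (f : X → Y) (hf : @Continuous X Y tX tY f)
    (Y₁ : Set Y) (hY₁ : K Y₁ (subTop tY Y₁)) :
    K (f ⁻¹' Y₁) (subTop tX (f ⁻¹' Y₁)) := by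
  have hS := aux_sierpinski hT0 hHomeo hRefl hNotT1
  have := hX.1
  have := hX.2
  have := hY.1
  have := hY.2
  have hKX := aux_sober hHomeo hRefl hS X
  have hKY := aux_sober hHomeo hRefl hS Y
  obtain ⟨Pk, tk, μ, hμ⟩ := hRefl (f ⁻¹' Y₁) (subTop tX (f ⁻¹' Y₁))
    (inferInstanceAs (T0Space (f ⁻¹' Y₁)))
  have hμc : Continuous μ := hμ.2.1
  obtain ⟨i, ⟨hi, him⟩, -⟩ := hμ.2.2 X tX hKX Subtype.val continuous_subtype_val
  have hfr : Continuous (fun p : f ⁻¹' Y₁ => (⟨f p.1, p.2⟩ : Y₁)) :=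
    (hf.comp continuous_subtype_val).subtype_mk _
  obtain ⟨g, ⟨hg, hgm⟩, -⟩ := hμ.2.2 Y₁ (subTop tY Y₁) hY₁ _ hfr
  have hg' : Continuous g := hg
  have heq : f ∘ i = Subtype.val ∘ g := by
    refine (hμ.2.2 Y tY hKY (fun p => f p.1) (hf.comp continuous_subtype_val)).unique
      ⟨hf.comp hi, ?_⟩ ⟨continuous_subtype_val.comp hg', ?_⟩
    · rw [Function.comp_assoc, him]; rfl
    · rw [Function.comp_assoc, hgm]; rfl
  have hmem : ∀ z, i z ∈ f ⁻¹' Y₁ := by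
    intro z
    have h := congrFun heq z
    simp only [Function.comp] at h
    rw [Set.mem_preimage, h]
    exact (g z).2
  exact aux_retract (tX := subTop tX (f ⁻¹' Y₁)) hHomeo hμ (fun z => ⟨i z, hmem z⟩)
    (hi.subtype_mk hmem) (fun x => Subtype.ext (congrFun him x))
end

section
/- The category Co-Sob of all co-sober T₀ spaces (a full subcategory of Top₀) is not reflective in Top₀, i.e., the inclusion functor Co-Sob → Top₀ has no left adjoint. -/
open TopologicalSpace

/-- A subset is saturated if it is the intersection of the open sets containing it. -/
def IsSaturatedSet {X : Type} (t : TopologicalSpace X) (Q : Set X) : Prop :=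
  Q = ⋂₀ {U : Set X | @IsOpen X t U ∧ Q ⊆ U}

/-- A nonempty compact saturated set `Q` is k-irreducible if whenever `Q = Q₁ ∪ Q₂` with
`Q₁, Q₂` compact saturated, then `Q = Q₁` or `Q = Q₂`. -/
def KIrreducible {X : Type} (t : TopologicalSpace X) (Q : Set X) : Prop :=
  Q.Nonempty ∧ @IsCompact X t Q ∧ IsSaturatedSet t Q ∧
    ∀ Q₁ Q₂ : Set X, @IsCompact X t Q₁ → IsSaturatedSet t Q₁ →
      @IsCompact X t Q₂ → IsSaturatedSet t Q₂ →
        Q = Q₁ ∪ Q₂ → Q = Q₁ ∨ Q = Q₂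

/-- A T₀ space is co-sober if every k-irreducible compact saturated set is `↑x` for a unique
point `x`. -/
def CoSober (X : Type) (t : TopologicalSpace X) : Prop :=
  ∀ Q : Set X, KIrreducible t Q → ∃! x : X, Q = {y | specLE t x y}

/-- The full subcategory of co-sober T₀ spaces. -/
def CoSobClass : SpaceClass := fun X t => @T0Space X t ∧ CoSober X t

namespace CoSobAux

inductive P : Type
  | a : P
  | s : P → P → ℕ → P
  | z : P → P → List ℕ → P

inductive I : Type
  | S : P → P → I
  | T : P → P → ℕ → I
  | R : P → P → (ℕ → ℕ) → I

def pre (g : ℕ → ℕ) : ℕ → List ℕ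
  | 0 => []
  | n + 1 => g n :: pre g n

theorem pre_length (g : ℕ → ℕ) (n : ℕ) : (pre g n).length = n := by
  induction n with
  | zero => rfl
  | succ k ih => simp [pre, ih]

theorem pre_agree (g g' : ℕ → ℕ) (n : ℕ) (h : pre g n = pre g' n) : ∀ m < n, g m = g' m := by
  induction n with
  | zero => intro m hm; omega
  | succ k ih =>
    simp only [pre, List.cons.injEq] at h
    intro m hm
    rcases Nat.lt_succ_iff_lt_or_eq.mp hm with h1 | h1
    · exact ih h.2 m h1
    · subst h1; exact h.1

def sq : I → Set P
  | .S x y => {p | ∃ n, p = P.s x y n}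
  | .T x y n => {p | ∃ l : List ℕ, l.length = n ∧ p = P.z x y l}
  | .R x y g => {p | ∃ n, p = P.z x y (pre g n)}

def lm : I → P × Bool
  | .S x _ => (x, false)
  | .T x y n => (P.s x y n, false)
  | .R _ y _ => (y, true)

theorem sq_TR (x y : P) (n : ℕ) (x' y' : P) (g : ℕ → ℕ) :
    (sq (.T x y n) ∩ sq (.R x' y' g)).Finite := by
  refine (Set.finite_singleton (P.z x' y' (pre g n))).subset ?_
  rintro p ⟨⟨l, hl, rfl⟩, m, hm⟩
  injection hm with h1 h2 h3
  subst h1 h2 h3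
  rw [pre_length] at hl
  subst hl
  simp

theorem sq_RR (x y : P) (g : ℕ → ℕ) (x' y' : P) (g' : ℕ → ℕ)
    (h : I.R x y g ≠ I.R x' y' g') : (sq (.R x y g) ∩ sq (.R x' y' g')).Finite := by
  by_cases hx : x = x' ∧ y = y'
  · obtain ⟨rfl, rfl⟩ := hx
    have hg : ∃ m, g m ≠ g' m := by
      by_contra hc
      push Not at hc
      exact h (by rw [funext hc])
    obtain ⟨m, hm⟩ := hg
    refine ((Set.finite_Iic m).image (fun n => P.z x y (pre g n))).subset ?_
    rintro p ⟨⟨n, rfl⟩, n', hn⟩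
    injection hn with _ _ h3
    have : n = n' := by
      have := congrArg List.length h3
      simpa [pre_length] using this
    subst this
    refine ⟨n, ?_, rfl⟩
    by_contra hlt
    exact hm (pre_agree g g' n h3 m (by simpa using hlt))
  · refine Set.finite_empty.subset ?_
    rintro p ⟨⟨n, rfl⟩, n', hn⟩
    injection hn with h1 h2 h3
    exact hx ⟨h1, h2⟩

theorem sq_ad (i j : I) (h : i ≠ j) : (sq i ∩ sq j).Finite := by
  rcases i with ⟨x, y⟩ | ⟨x, y, n⟩ | ⟨x, y, g⟩ <;> rcases j with ⟨x', y'⟩ | ⟨x', y', n'⟩ | ⟨x', y', g'⟩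
  · refine Set.finite_empty.subset ?_
    rintro p ⟨⟨n, rfl⟩, n', hn⟩
    injection hn with h1 h2 h3
    exact h (by rw [h1, h2])
  · refine Set.finite_empty.subset ?_
    rintro p ⟨⟨n, rfl⟩, n', _, hn⟩
    cases hn
  · refine Set.finite_empty.subset ?_
    rintro p ⟨⟨n, rfl⟩, n', hn⟩
    cases hn
  · refine Set.finite_empty.subset ?_
    rintro p ⟨⟨n, _, rfl⟩, n', hn⟩
    cases hn
  · refine Set.finite_empty.subset ?_
    rintro p ⟨⟨l, hl, rfl⟩, l', hl', hn⟩
    injection hn with h1 h2 h3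
    exact h (by rw [h1, h2, ← hl, ← hl', h3])
  · exact sq_TR ..
  · refine Set.finite_empty.subset ?_
    rintro p ⟨⟨n, rfl⟩, n', hn⟩
    cases hn
  · rw [Set.inter_comm]; exact sq_TR ..
  · exact sq_RR _ _ _ _ _ _ h

abbrev Y : Type := P × Bool

def le (u v : Y) : Prop := u.1 = v.1 ∧ (u.2 = true → v.2 = true)

theorem le_refl' (u : Y) : le u u := ⟨rfl, id⟩
theorem le_trans' {u v w : Y} (h : le u v) (h' : le v w) : le u w :=
  ⟨h.1.trans h'.1, fun k => h'.2 (h.2 k)⟩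
theorem le_antisymm' {u v : Y} (h : le u v) (h' : le v u) : u = v := by
  obtain ⟨p, b⟩ := u
  obtain ⟨q, c⟩ := v
  obtain ⟨h1, h2⟩ := h
  obtain ⟨h3, h4⟩ := h'
  simp only at h1 h2 h4
  subst h1
  cases b <;> cases c <;> simp_all

theorem le_false {u : Y} {p : P} (h : le u (p, false)) : u = (p, false) := by
  obtain ⟨q, c⟩ := u
  obtain ⟨h1, h2⟩ := h
  simp only at h1 h2
  subst h1
  cases c <;> simp_all

theorem down_finite (v : Y) : {u | le u v}.Finite := by
  refine (Set.toFinite {(v.1, false), (v.1, true)}).subset ?_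
  rintro ⟨p, b⟩ ⟨h1, _⟩
  simp only at h1
  subst h1
  cases b <;> simp

def ss (i : I) : Set Y := (fun p => (p, false)) '' sq i

theorem ss_ad (i j : I) (h : (ss i ∩ ss j).Infinite) : i = j := by
  by_contra hne
  apply h
  unfold ss
  rw [← Set.image_inter (fun p q h => by simpa using h)]
  exact (sq_ad i j hne).image _

def Cl (D : Set Y) : Prop :=
  (∀ u v, le u v → v ∈ D → u ∈ D) ∧
  (∃ F : Set I, F.Finite ∧ (D \ ⋃ i ∈ F, ss i).Finite) ∧
  ∀ i, (D ∩ ss i).Infinite → lm i ∈ D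

instance tY : TopologicalSpace Y :=
  TopologicalSpace.ofClosed {D | D = Set.univ ∨ Cl D}
    (by
      right
      refine ⟨by simp, ⟨∅, by simp, by simp⟩, by simp⟩)
    (by
      intro A hA
      by_cases h : ∃ D ∈ A, Cl D
      · obtain ⟨D, hD, hcl⟩ := h
        right
        refine ⟨?_, ?_, ?_⟩
        · intro u v huv hv E hE
          rcases hA hE with rfl | hE'
          · trivial
          · exact hE'.1 u v huv (hv E hE)
        · obtain ⟨F, hF, hf⟩ := hcl.2.1
          exact ⟨F, hF, hf.subset (Set.sdiff_subset_sdiff_left (Set.sInter_subset_of_mem hD))⟩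
        · intro i hi E hE
          rcases hA hE with rfl | hE'
          · trivial
          · exact hE'.2.2 i (hi.mono (Set.inter_subset_inter_left _ (Set.sInter_subset_of_mem hE)))
      · left
        push Not at h
        rw [Set.sInter_eq_univ]
        intro D hD
        exact (hA hD).resolve_right (h D hD))
    (by
      rintro A (rfl | hA) B (rfl | hB)
      · left; simp
      · left; simp
      · left; simp
      · right
        refine ⟨?_, ?_, ?_⟩
        · rintro u v huv (hv | hv)
          · exact Or.inl (hA.1 u v huv hv)
          · exact Or.inr (hB.1 u v huv hv)
        · obtain ⟨F, hF, hf⟩ := hA.2.1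
          obtain ⟨G, hG, hg⟩ := hB.2.1
          refine ⟨F ∪ G, hF.union hG, (hf.union hg).subset ?_⟩
          rintro x ⟨hx | hx, hn⟩
          · left
            refine ⟨hx, fun hc => hn ?_⟩
            rw [Set.biUnion_union]
            exact Or.inl hc
          · right
            refine ⟨hx, fun hc => hn ?_⟩
            rw [Set.biUnion_union]
            exact Or.inr hc
        · intro i hi
          rw [Set.union_inter_distrib_right, Set.infinite_union] at hi
          rcases hi with hi | hi
          · exact Or.inl (hA.2.2 i hi)
          · exact Or.inr (hB.2.2 i hi))

theorem isClosed_iffY (D : Set Y) : IsClosed D ↔ D = Set.univ ∨ Cl D := by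
  rw [← isOpen_compl_iff]
  change Dᶜᶜ = Set.univ ∨ Cl Dᶜᶜ ↔ _
  rw [compl_compl]

theorem closed_lower {D : Set Y} (h : IsClosed D) {u v : Y} (huv : le u v) (hv : v ∈ D) :
    u ∈ D := by
  rcases (isClosed_iffY D).1 h with rfl | h
  · trivial
  · exact h.1 u v huv hv

theorem closed_of_finite {D : Set Y} (h : D.Finite) (hl : ∀ u v, le u v → v ∈ D → u ∈ D) :
    IsClosed D := by
  rw [isClosed_iffY]
  right
  exact ⟨hl, ⟨∅, by simp, by simpa using h⟩, fun i hi => absurd (h.subset Set.inter_subset_left) hi⟩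

theorem closed_down (v : Y) : IsClosed {u | le u v} :=
  closed_of_finite (down_finite v) (fun _ _ h h' => le_trans' h h')

theorem spec_iff (u v : Y) : u ∈ closure {v} ↔ le u v := by
  constructor
  · intro h
    exact closure_minimal (by simpa using le_refl' v) (closed_down v) h
  · intro h
    exact closed_lower isClosed_closure h (subset_closure rfl)

instance : T0Space Y := by
  refine ⟨fun u v h => ?_⟩
  have h1 := h.specializes
  have h2 := h.symm.specializes
  rw [specializes_iff_mem_closure, spec_iff] at h1 h2
  exact le_antisymm' h2 h1

theorem sat_iff (Q : Set Y) : IsSaturatedSet tY Q ↔ ∀ u v, le u v → u ∈ Q → v ∈ Q := by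
  constructor
  · intro h u v huv hu
    rw [h]
    rintro U ⟨hU, hQ⟩
    by_contra hv
    have := closed_lower (D := Uᶜ) hU.isClosed_compl huv hv
    exact this (hQ hu)
  · intro h
    apply Set.Subset.antisymm
    · intro q hq U hU
      exact hU.2 hq
    · intro q hq
      by_contra hn
      refine hq {u | le u q}ᶜ ⟨(closed_down q).isOpen_compl, ?_⟩ (le_refl' q)
      intro u hu hc
      exact hn (h u q hc hu)

theorem le_nhds_iff (𝒰 : Ultrafilter Y) (y : Y) :
    (𝒰 : Filter Y) ≤ nhds y ↔ ∀ D, IsClosed D → D ∈ 𝒰 → y ∈ D := by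
  constructor
  · intro h D hD hU
    by_contra hy
    have : Dᶜ ∈ 𝒰 := h (hD.isOpen_compl.mem_nhds hy)
    exact (Ultrafilter.compl_mem_iff_notMem.1 this) hU
  · intro h U hU
    obtain ⟨V, hVU, hV, hy⟩ := mem_nhds_iff.1 hU
    by_contra hc
    have h1 : V ∉ (𝒰 : Filter Y) := fun h' => hc (Filter.mem_of_superset h' hVU)
    exact h Vᶜ hV.isClosed_compl (Ultrafilter.compl_mem_iff_notMem.2 h1) hy

theorem ultra_finite (𝒰 : Ultrafilter Y) (A : Set Y) (hA : A.Finite) (h : A ∈ 𝒰) :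
    ∃ a ∈ A, {a} ∈ 𝒰 := by
  rw [← Set.biUnion_of_singleton A] at h
  exact (Ultrafilter.finite_biUnion_mem_iff hA).1 h

theorem compact_iff (K : Set Y) :
    IsCompact K ↔ ∀ i, (K ∩ ss i).Infinite → ∃ y ∈ K, le y (lm i) := by
  rw [isCompact_iff_ultrafilter_le_nhds']
  constructor
  · intro h i hi
    have := Set.Infinite.to_subtype hi
    obtain ⟨𝒰, h𝒰⟩ : ∃ 𝒰 : Ultrafilter Y, (𝒰 : Filter Y) ≤ Filter.cofinite ⊓ Filter.principal (K ∩ ss i) := by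
      have : (Filter.cofinite ⊓ Filter.principal (K ∩ ss i)).NeBot :=
        Filter.cofinite_inf_principal_neBot_iff.2 hi
      exact ⟨Ultrafilter.of _, Ultrafilter.of_le _⟩
    have hKs : K ∩ ss i ∈ 𝒰 := h𝒰 (Filter.mem_inf_of_right (Filter.mem_principal_self _))
    obtain ⟨y, hy, hlim⟩ := h 𝒰 (Filter.mem_of_superset hKs Set.inter_subset_left)
    rw [le_nhds_iff] at hlim
    refine ⟨y, hy, ?_⟩
    have hD : IsClosed ((ss i \ {y}) ∪ {u | le u (lm i)}) := by
      rw [isClosed_iffY]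
      right
      refine ⟨?_, ⟨{i}, by simp, ?_⟩, ?_⟩
      · rintro u v huv (hv | hv)
        · obtain ⟨⟨p, hp, rfl⟩, hv2⟩ := hv
          rw [le_false huv]
          exact Or.inl ⟨⟨p, hp, rfl⟩, hv2⟩
        · exact Or.inr (le_trans' huv hv)
      · refine (down_finite (lm i)).subset ?_
        rintro u ⟨hu | hu, hn⟩
        · simp at hn; exact absurd hu.1 hn
        · exact hu
      · intro j hj
        right
        rw [Set.union_inter_distrib_right, Set.infinite_union] at hj
        rcases hj with hj | hj
        · have := ss_ad i j (hj.mono (Set.inter_subset_inter_left _ Set.sdiff_subset))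
          subst this
          exact le_refl' _
        · exact absurd ((down_finite (lm i)).subset Set.inter_subset_left) hj
    have hmem : (ss i \ {y}) ∪ {u | le u (lm i)} ∈ 𝒰 := by
      have h1 : ({y} : Set Y)ᶜ ∈ 𝒰 := h𝒰 (Filter.mem_inf_of_left (Set.finite_singleton y).compl_mem_cofinite)
      refine Filter.mem_of_superset (Filter.inter_mem hKs h1) ?_
      rintro u ⟨hu, hu'⟩
      exact Or.inl ⟨hu.2, hu'⟩
    rcases hlim _ hD hmem with h1 | h1
    · exact absurd rfl h1.2
    · exact h1
  · intro h 𝒰 hK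
    simp only [le_nhds_iff]
    by_cases hp : ∃ a, {a} ∈ 𝒰
    · obtain ⟨a, ha⟩ := hp
      have hm : ∀ D, D ∈ 𝒰 → a ∈ D := by
        intro D hD
        obtain ⟨b, hb, hb'⟩ := 𝒰.nonempty_of_mem (Filter.inter_mem ha hD)
        rw [Set.mem_singleton_iff] at hb
        exact hb ▸ hb'
      exact ⟨a, hm K hK, fun D _ hD => hm D hD⟩
    have hfin : ∀ A : Set Y, A.Finite → A ∉ 𝒰 := by
      intro A hA hc
      obtain ⟨a, _, ha⟩ := ultra_finite 𝒰 A hA hc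
      exact hp ⟨a, ha⟩
    by_cases hs : ∃ i, ss i ∈ 𝒰
    · obtain ⟨i, hi⟩ := hs
      obtain ⟨y, hy, hle⟩ := h i (fun hf => hfin _ hf (Filter.inter_mem hK hi))
      refine ⟨y, hy, fun D hD hDU => closed_lower hD hle ?_⟩
      rcases (isClosed_iffY D).1 hD with rfl | hD
      · trivial
      · exact hD.2.2 i (fun hf => hfin _ hf (Filter.inter_mem hDU hi))
    · obtain ⟨y, hy⟩ := 𝒰.nonempty_of_mem hK
      refine ⟨y, hy, fun D hD hDU => ?_⟩
      rcases (isClosed_iffY D).1 hD with rfl | hD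
      · trivial
      · exfalso
        obtain ⟨F, hF, hf⟩ := hD.2.1
        by_cases hu : (⋃ i ∈ F, ss i) ∈ 𝒰
        · obtain ⟨i, _, hi⟩ := (Ultrafilter.finite_biUnion_mem_iff hF).1 hu
          exact hs ⟨i, hi⟩
        · exact hfin _ hf (Filter.inter_mem hDU (Ultrafilter.compl_mem_iff_notMem.2 hu))

inductive Desc (x : P) : P → Prop
  | refl : Desc x x
  | s (p y : P) (n : ℕ) : Desc x p → Desc x (P.s p y n)
  | z (p y : P) (l : List ℕ) : Desc x (P.s p y l.length) → Desc x (P.z p y l)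

def depth : P → ℕ
  | .a => 0
  | .s x _ _ => depth x + 1
  | .z x _ _ => depth x + 2

theorem desc_depth {x p : P} (h : Desc x p) : p = x ∨ depth x < depth p := by
  induction h with
  | refl => exact Or.inl rfl
  | s p y n _ ih =>
    right
    rcases ih with rfl | ih <;> simp only [depth] <;> omega
  | z p y l _ ih =>
    right
    rcases ih with ih | ih
    · rw [← ih]; simp only [depth]; omega
    · simp only [depth] at *; omega

def STOpen (U : Set P) : Prop := ∀ i p, lm i = (p, false) → p ∈ U → (sq i \ U).Finite

theorem desc_open (x : P) : STOpen {p | Desc x p} := by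
  intro i p hp hU
  refine Set.finite_empty.subset ?_
  rcases i with ⟨x', y'⟩ | ⟨x', y', n'⟩ | ⟨x', y', g'⟩
  · rintro q ⟨⟨n, rfl⟩, hq⟩
    simp only [lm, Prod.mk.injEq, and_true] at hp
    subst hp
    exact hq (Desc.s _ _ _ hU)
  · rintro q ⟨⟨l, rfl, rfl⟩, hq⟩
    simp only [lm, Prod.mk.injEq, and_true] at hp
    subst hp
    exact hq (Desc.z _ _ _ hU)
  · simp [lm] at hp

theorem desc_compl_open (x : P) : STOpen {p | Desc x p}ᶜ := by
  intro i p hp hU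
  refine (Set.finite_singleton x).subset ?_
  rcases i with ⟨x', y'⟩ | ⟨x', y', n'⟩ | ⟨x', y', g'⟩
  · rintro q ⟨⟨n, rfl⟩, hq⟩
    simp only [lm, Prod.mk.injEq, and_true] at hp
    subst hp
    simp only [Set.mem_compl_iff, Set.mem_ofPred_eq, not_not] at hq hU
    cases hq with
    | refl => rfl
    | s _ _ _ h => exact absurd h hU
  · rintro q ⟨⟨l, rfl, rfl⟩, hq⟩
    simp only [lm, Prod.mk.injEq, and_true] at hp
    subst hp
    simp only [Set.mem_compl_iff, Set.mem_ofPred_eq, not_not] at hq hU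
    cases hq with
    | refl => rfl
    | z _ _ _ h => exact absurd h hU
  · simp [lm] at hp

theorem separate {x x' : P} (h : x ≠ x') :
    ∃ U U' : Set P, STOpen U ∧ STOpen U' ∧ x ∈ U ∧ x' ∈ U' ∧ Disjoint U U' := by
  by_cases hd : Desc x x'
  · have hd' : ¬ Desc x' x := by
      intro hc
      rcases desc_depth hd with h1 | h1
      · exact h h1.symm
      rcases desc_depth hc with h2 | h2
      · exact h h2
      omega
    exact ⟨_, _, desc_compl_open x', desc_open x', hd', Desc.refl, disjoint_compl_left⟩
  · exact ⟨_, _, desc_open x, desc_compl_open x, Desc.refl, hd, disjoint_compl_right⟩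

def low (U : Set P) : Set Y := {u | u.1 ∈ U ∧ u.2 = false}

theorem diff_compact {K : Set Y} (hK : IsCompact K) (hs : IsSaturatedSet tY K) {U : Set P}
    (hU : STOpen U) : IsCompact (K \ low U) ∧ IsSaturatedSet tY (K \ low U) := by
  rw [sat_iff] at hs ⊢
  rw [compact_iff] at hK ⊢
  constructor
  · intro i hi
    obtain ⟨y, hy, hle⟩ := hK i (hi.mono (Set.inter_subset_inter_left _ Set.sdiff_subset))
    refine ⟨lm i, ⟨hs _ _ hle hy, ?_⟩, le_refl' _⟩
    rintro ⟨h1, h2⟩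
    have hf := hU i (lm i).1 (Prod.ext rfl h2) h1
    refine hi ((hf.image (fun p => (p, false))).subset ?_)
    rintro u ⟨⟨_, hu⟩, ⟨p, hp, rfl⟩⟩
    exact ⟨p, ⟨hp, fun hc => hu ⟨hc, rfl⟩⟩, rfl⟩
  · rintro u v huv ⟨hu, hu'⟩
    refine ⟨hs _ _ huv hu, ?_⟩
    rintro ⟨h1, h2⟩
    have : u = v := by
      obtain ⟨p, b⟩ := v
      simp only at h2
      subst h2
      exact le_false huv
    subst this
    exact hu' ⟨h1, h2⟩

theorem coSober_of {X : Type} (t : TopologicalSpace X) (h0 : @T0Space X t)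
    (h : ∀ Q : Set X, KIrreducible t Q → ∃ x : X, Q = {y | specLE t x y}) : CoSober X t := by
  intro Q hQ
  obtain ⟨x, hx⟩ := h Q hQ
  refine ⟨x, hx, ?_⟩
  intro y hy
  have h1 : specLE t x y := by
    have : y ∈ Q := by rw [hy]; exact subset_closure rfl
    rw [hx] at this; exact this
  have h2 : specLE t y x := by
    have : x ∈ Q := by rw [hx]; exact subset_closure rfl
    rw [hy] at this; exact this
  have h1' : y ⤳ x := specializes_iff_mem_closure.2 h1
  have h2' : x ⤳ y := specializes_iff_mem_closure.2 h2
  exact (h1'.antisymm h2').eq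

theorem compact_upper {K : Set Y} (h : ∀ u ∈ K, u.2 = true) :
    IsCompact K ∧ IsSaturatedSet tY K := by
  rw [compact_iff, sat_iff]
  constructor
  · intro i hi
    exfalso
    refine hi (Set.finite_empty.subset ?_)
    rintro u ⟨hu, ⟨p, _, rfl⟩⟩
    exact absurd (h _ hu) (by simp)
  · rintro ⟨p, b⟩ ⟨q, c⟩ ⟨h1, h2⟩ hu
    have hb := h _ hu
    have hc := h2 hb
    simp only at h1 hb hc
    subst h1 hb hc
    exact hu

theorem compact_princ (x : Y) :
    IsCompact {y | le x y} ∧ IsSaturatedSet tY {y | le x y} := by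
  rw [compact_iff, sat_iff]
  refine ⟨fun i hi => ?_, fun u v h h' => le_trans' h' h⟩
  exfalso
  refine hi (Set.Finite.subset (Set.finite_singleton (x.1, false)) ?_)
  rintro u ⟨⟨hu, _⟩, ⟨p, _, rfl⟩⟩
  simp only at hu
  simp [hu]

theorem coSoberY : CoSobClass Y tY := by
  refine ⟨inferInstance, coSober_of _ inferInstance ?_⟩
  rintro Q ⟨hne, hc, hs, hirr⟩
  have hspec : ∀ x : Y, {y | specLE tY x y} = {y | le x y} := by
    intro x; ext y; exact spec_iff x y
  simp only [hspec]
  by_cases h : ∃ x, (x, false) ∈ Q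
  · obtain ⟨x, hx⟩ := h
    have huniq : ∀ x', (x', false) ∈ Q → x' = x := by
      intro x' hx'
      by_contra hne
      obtain ⟨U, U', hU, hU', hxU, hxU', hd⟩ := separate hne
      have h1 := diff_compact hc hs hU
      have h2 := diff_compact hc hs hU'
      have hun : Q = (Q \ low U) ∪ (Q \ low U') := by
        ext u
        constructor
        · intro hu
          by_cases hl : u ∈ low U
          · right
            exact ⟨hu, fun hc => Set.disjoint_left.1 hd hl.1 hc.1⟩
          · exact Or.inl ⟨hu, hl⟩
        · rintro (hu | hu) <;> exact hu.1
      rcases hirr _ _ h1.1 h1.2 h2.1 h2.2 hun with h3 | h3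
      · rw [h3] at hx'; exact hx'.2 ⟨hxU, rfl⟩
      · rw [h3] at hx; exact hx.2 ⟨hxU', rfl⟩
    have h1 := compact_princ (x, false)
    have h2 := compact_upper (K := Q ∩ {u | u.2 = true}) (fun u hu => hu.2)
    have hun : Q = {y | le (x, false) y} ∪ (Q ∩ {u | u.2 = true}) := by
      ext u
      constructor
      · intro hu
        obtain ⟨p, b⟩ := u
        cases b
        · left; rw [huniq p hu]; exact le_refl' _
        · right; exact ⟨hu, rfl⟩
      · rintro (hu | hu)
        · exact (sat_iff Q).1 hs _ _ hu hx
        · exact hu.1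
    rcases hirr _ _ h1.1 h1.2 h2.1 h2.2 hun with h3 | h3
    · exact ⟨_, h3⟩
    · rw [h3] at hx
      exact absurd hx.2 (by simp)
  · have hup : ∀ u ∈ Q, u.2 = true := by
      rintro ⟨p, b⟩ hu
      cases b
      · exact absurd ⟨p, hu⟩ h
      · rfl
    obtain ⟨x, hx⟩ := hne
    have h1 := compact_princ x
    have h2 := compact_upper (K := Q \ {x}) (fun u hu => hup u hu.1)
    have hun : Q = {y | le x y} ∪ (Q \ {x}) := by
      ext u
      constructor
      · intro hu
        by_cases hux : u = x
        · left; rw [hux]; exact le_refl' _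
        · exact Or.inr ⟨hu, hux⟩
      · rintro (hu | hu)
        · exact (sat_iff Q).1 hs _ _ hu hx
        · exact hu.1
    rcases hirr _ _ h1.1 h1.2 h2.1 h2.2 hun with h3 | h3
    · exact ⟨_, h3⟩
    · rw [h3] at hx
      exact absurd rfl hx.2

theorem hyper (A B : Set P) (hA : ∀ i, (A ∩ sq i).Infinite → (lm i).1 ∈ A)
    (hB : ∀ i, (B ∩ sq i).Infinite → (lm i).1 ∈ B) (hAB : ∀ p, p ∈ A ∨ p ∈ B) :
    (∀ p, p ∈ A) ∨ (∀ p, p ∈ B) := by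
  by_contra hcon
  push Not at hcon
  obtain ⟨⟨x, hx⟩, ⟨y, hy⟩⟩ := hcon
  have h1 : (A ∩ sq (.S x y)).Finite := by
    by_contra hc; exact hx (hA _ hc)
  have h1' : {n | P.s x y n ∈ A}.Finite := by
    refine Set.Finite.of_finite_image (f := fun n => P.s x y n) (h1.subset ?_) ?_
    · rintro _ ⟨n, hn, rfl⟩
      exact ⟨hn, n, rfl⟩
    · intro a _ b _ hab
      injection hab
  obtain ⟨N, hN⟩ := h1'.bddAbove
  have h2 : ∀ l : List ℕ, ∃ k, N < l.length + 1 → P.z x y (k :: l) ∉ A := by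
    intro l
    by_contra hc
    push Not at hc
    have hf : (A ∩ sq (.T x y (l.length + 1))).Finite := by
      by_contra hcc
      have h3 : P.s x y (l.length + 1) ∈ A := hA _ hcc
      have := hN h3
      have := (hc 0).1
      omega
    have : (Set.univ : Set ℕ).Finite := by
      refine Set.Finite.of_finite_image (f := fun k => P.z x y (k :: l)) (hf.subset ?_) ?_
      · rintro _ ⟨k, _, rfl⟩
        exact ⟨(hc k).2, k :: l, by simp, rfl⟩
      · intro a _ b _ hab
        injection hab with _ _ h
        injection h
    exact Set.infinite_univ this
  choose h hh using h2
  let L : ℕ → List ℕ := fun n => Nat.rec [] (fun _ l => h l :: l) n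
  let g : ℕ → ℕ := fun n => h (L n)
  have hL : ∀ n, pre g n = L n := by
    intro n
    induction n with
    | zero => rfl
    | succ k ih => 
      change g k :: pre g k = h (L k) :: L k
      rw [ih]
  have h3 : ∀ n, N ≤ n → P.z x y (pre g (n + 1)) ∈ B := by
    intro n hn
    refine (hAB _).resolve_left ?_
    change P.z x y (g n :: pre g n) ∉ A
    have : g n = h (pre g n) := by rw [hL]
    rw [this]
    apply hh
    rw [pre_length]; omega
  refine hy (hB (.R x y g) ?_)
  refine Set.infinite_of_injective_forall_mem (f := fun n : ℕ => P.z x y (pre g (N + n + 1))) ?_ ?_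
  · intro a b hab
    injection hab with _ _ h
    have := congrArg List.length h
    simp only [pre_length] at this
    omega
  · intro n
    exact ⟨h3 _ (by omega), _, rfl⟩

abbrev X : Type := {u : Y // u.2 = false}

theorem X_compact_sets (K : Set X) (hK : IsCompact K) :
    ∀ i, ({p | (⟨(p, false), rfl⟩ : X) ∈ K} ∩ sq i).Infinite →
      (lm i).1 ∈ {p | (⟨(p, false), rfl⟩ : X) ∈ K} := by
  intro i hi
  have h := (compact_iff _).1 (hK.image continuous_subtype_val) i ?_
  · obtain ⟨y, ⟨⟨⟨p, b⟩, hb⟩, hx, rfl⟩, hle⟩ := h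
    simp only at hb
    subst hb
    have := hle.1
    simp only at this
    change (⟨((lm i).1, false), rfl⟩ : X) ∈ K
    simpa only [← this] using hx
  · refine Set.Infinite.mono ?_ (hi.image (f := fun p => ((p, false) : Y)) ?_)
    · rintro _ ⟨p, ⟨hp, hp'⟩, rfl⟩
      exact ⟨⟨_, hp, rfl⟩, ⟨p, hp', rfl⟩⟩
    · intro a _ b _ hab
      simpa using hab

theorem X_not : ¬ CoSober X inferInstance := by
  intro h
  have hirr : KIrreducible (inferInstance : TopologicalSpace X) Set.univ := by
    refine ⟨⟨⟨(P.a, false), rfl⟩, trivial⟩, ?_, ?_, ?_⟩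
    · rw [Subtype.isCompact_iff, compact_iff]
      intro i _
      refine ⟨((lm i).1, false), ⟨⟨_, rfl⟩, trivial, rfl⟩, rfl, by simp⟩
    · apply Set.Subset.antisymm
      · intro q hq U hU
        exact hU.2 hq
      · exact Set.subset_univ _
    · intro Q₁ Q₂ h1 _ h2 _ hun
      have := hyper _ _ (X_compact_sets Q₁ h1) (X_compact_sets Q₂ h2) (fun p => by
        have : (⟨(p, false), rfl⟩ : X) ∈ Q₁ ∪ Q₂ := by rw [← hun]; trivial
        exact this)
      rcases this with h | h
      · left
        symm
        rw [Set.eq_univ_iff_forall]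
        rintro ⟨⟨p, b⟩, hb⟩
        simp only at hb
        subst hb
        exact h p
      · right
        symm
        rw [Set.eq_univ_iff_forall]
        rintro ⟨⟨p, b⟩, hb⟩
        simp only at hb
        subst hb
        exact h p
  obtain ⟨x, hx, _⟩ := h _ hirr
  have key : ∀ y : X, x.1 = y.1 := by
    intro y
    have : y ∈ {y | specLE inferInstance x y} := by
      rw [← hx]; trivial
    have h1 : x ∈ closure {y} := this
    rw [closure_subtype, Set.image_singleton, spec_iff] at h1
    obtain ⟨⟨p, b⟩, hb⟩ := y
    simp only at hb
    subst hb
    exact le_false h1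
  have h1 := (key ⟨(P.a, false), rfl⟩).symm.trans (key ⟨(P.s P.a P.a 0, false), rfl⟩)
  simp at h1

theorem sat_preimage {A B : Type} [tA : TopologicalSpace A] [tB : TopologicalSpace B] {f : A → B}
    (hf : Continuous f) {Q : Set B} (hQ : IsSaturatedSet tB Q) : IsSaturatedSet tA (f ⁻¹' Q) := by
  apply Set.Subset.antisymm
  · intro q hq U hU
    exact hU.2 hq
  · intro x hx
    change f x ∈ Q
    rw [hQ]
    rintro U ⟨hU, hQU⟩
    exact hx (f ⁻¹' U) ⟨hU.preimage hf, Set.preimage_mono hQU⟩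

theorem coSober_homeo {A B : Type} [tA : TopologicalSpace A] [tB : TopologicalSpace B] [T0Space A]
    (φ : A ≃ₜ B) (h : CoSober B tB) : CoSober A tA := by
  refine coSober_of _ inferInstance ?_
  rintro Q ⟨⟨q, hq⟩, hc, hs, hirr⟩
  have hback : ∀ K : Set B, φ.symm ⁻¹' (φ ⁻¹' K) = K := fun K => by ext; simp
  have hback' : ∀ K : Set A, φ ⁻¹' (φ.symm ⁻¹' K) = K := fun K => by ext; simp
  obtain ⟨x, hx, _⟩ := h (φ.symm ⁻¹' Q) ⟨⟨φ q, by simpa using hq⟩,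
    φ.symm.isCompact_preimage.2 hc, sat_preimage φ.symm.continuous hs, by
      intro Q₁ Q₂ h1 s1 h2 s2 hun
      have := hirr (φ ⁻¹' Q₁) (φ ⁻¹' Q₂) (φ.isCompact_preimage.2 h1)
        (sat_preimage φ.continuous s1) (φ.isCompact_preimage.2 h2)
        (sat_preimage φ.continuous s2) (by rw [← Set.preimage_union, ← hun, hback'])
      rcases this with h | h
      · left; rw [h, hback]
      · right; rw [h, hback]⟩
  refine ⟨φ.symm x, ?_⟩
  rw [← hback' Q, hx]
  ext y
  change x ∈ closure {φ y} ↔ φ.symm x ∈ closure {y}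
  rw [← Set.image_singleton, ← φ.image_closure]
  constructor
  · rintro ⟨w, hw, rfl⟩
    simpa using hw
  · intro hw
    exact ⟨_, hw, by simp⟩

theorem coSoberProp : CoSobClass Prop sierpinskiSpace := by
  refine ⟨inferInstance, coSober_of _ inferInstance ?_⟩
  rintro Q ⟨⟨q, hq⟩, _, hs, _⟩
  have hup : ∀ p q : Prop, p ∈ Q → specLE sierpinskiSpace p q → q ∈ Q := by
    intro p q hp hpq
    rw [hs]
    rintro U ⟨hU, hQU⟩
    have h : q ⤳ p := specializes_iff_mem_closure.2 hpq
    exact h.mem_open hU (hQU hp)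
  by_cases hF : False ∈ Q
  · refine ⟨False, ?_⟩
    have : ∀ q : Prop, specLE sierpinskiSpace False q := by
      intro q
      have : q ⤳ False := by
        change nhds q ≤ nhds False
        rw [nhds_false]
        exact le_top
      exact specializes_iff_mem_closure.1 this
    ext q
    exact ⟨fun _ => this q, fun h => hup _ _ hF h⟩
  · refine ⟨True, ?_⟩
    have hq' : ∀ p ∈ Q, p = True := by
      intro p hp
      by_cases hpp : p
      · simp [hpp]
      · simp [hpp] at hp; exact absurd hp hF
    have hT : True ∈ Q := by
      have := hq' q hq
      subst this; exact hq
    ext p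
    constructor
    · intro hp
      rw [hq' p hp]
      exact subset_closure rfl
    · exact hup _ _ hT

end CoSobAux

/-- the category of co-sober T₀ spaces is not reflective in Top₀. -/
theorem statement16 : ¬ IsReflective CoSobClass := by
  intro H
  obtain ⟨Xk, tk, μ, hK, hμ, huniv⟩ := H CoSobAux.X inferInstance inferInstance
  obtain ⟨e, ⟨he, heμ⟩, _⟩ := huniv _ _ CoSobAux.coSoberY Subtype.val continuous_subtype_val
  have hle : ∀ k, (e k).2 = false := by
    intro k
    by_contra hk
    have hk' : (e k).2 = true := by simpa using hk
    have hB : IsOpen ({((e k).1, false)}ᶜ : Set CoSobAux.Y) := by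
      refine (CoSobAux.closed_of_finite (Set.finite_singleton _) ?_).isOpen_compl
      rintro u v huv rfl
      exact CoSobAux.le_false huv
    have hA : IsOpen ({u | CoSobAux.le u (e k)}ᶜ : Set CoSobAux.Y) :=
      (CoSobAux.closed_down _).isOpen_compl
    have cB : Continuous (fun q : Xk => e q ∈ ({((e k).1, false)}ᶜ : Set CoSobAux.Y)) :=
      (isOpen_iff_continuous_mem.1 hB).comp he
    have cA : Continuous (fun q : Xk => e q ∈ ({u | CoSobAux.le u (e k)}ᶜ : Set CoSobAux.Y)) :=
      (isOpen_iff_continuous_mem.1 hA).comp he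
    have heq := (huniv _ _ CoSobAux.coSoberProp _ (cB.comp hμ)).unique ⟨cB, rfl⟩ ⟨cA, by
      funext x
      have hx : e (μ x) = x.1 := congrFun heμ x
      have hx2 := x.2
      simp only [Function.comp, hx]
      obtain ⟨⟨p, b⟩, hb⟩ := x
      simp only at hb
      subst hb
      simp [CoSobAux.le]⟩
    have := congrFun heq k
    have h2 : e k ∈ ({((e k).1, false)}ᶜ : Set CoSobAux.Y) := by
      intro hc
      rw [Set.mem_singleton_iff] at hc
      rw [hc] at hk'
      simp at hk'
    rw [this] at h2
    exact h2 (CoSobAux.le_refl' _)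
  let r : Xk → CoSobAux.X := fun k => ⟨e k, hle k⟩
  have hr : Continuous r := he.subtype_mk hle
  have hrμ : ∀ x, r (μ x) = x := fun x => Subtype.ext (congrFun heμ x)
  have hμr : μ ∘ r = id := by
    refine (huniv _ _ hK μ hμ).unique ⟨hμ.comp hr, ?_⟩ ⟨continuous_id, rfl⟩
    funext x
    simp [hrμ]
  have hμr' : ∀ k, μ (r k) = k := fun k => congrFun hμr k
  let φ : CoSobAux.X ≃ₜ Xk :=
    { toFun := μ, invFun := r, left_inv := hrμ, right_inv := hμr',
      continuous_toFun := hμ, continuous_invFun := hr }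
  apply CoSobAux.X_not
  exact CoSobAux.coSober_homeo φ hK.2
end
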